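/- MoV_SC satisfies cover-consistency: for every n-weighted tournament T=(V,w) and all alternatives x,y∈V, if x w-covers y then MoV_SC(x,T) ≥ MoV_SC(y,T). -/

import Mathlib

/-!
Membership in `SC` is a reachability condition (`mem_SC_iff`): `a` is a Split Cycle winner iff
whenever `z` beats `a` with margin `t`, there is a path from `a` to `z` all of whose edges have
margin at least `t`.

Let `x` w-cover `y` in `T`, and let `T'` be any tournament on the same alternatives. Sort the rows
of `x` and `y` in `T'`: for each `z` give `x` the larger of `w'(x,z)`, `w'(y,z)` and `y` the
smaller, and orient the edge between `x` and `y` in favour of `x`. The sorted tournament `T''`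
has three properties.

* It is at most as far from `T` as `T'` is (`dist_sortT_le`): the rows of `x` and `y` are already
  sorted in `T`, and matching two pairs of numbers in sorted order minimizes the total distance.
* If `y` wins in `T'`, then `x` wins in `T''` (`IsSort.mem_SC`): the part after the last visit to
  `{x, y}` of a path from `y` to `z` becomes a path from `x` to `z` in `T''`.
* If `x` loses in `T'`, then `y` loses in `T''` (`IsSort.notMem_SC`), by a similar rerouting.

So a constructive reversal for `y` yields one for `x` of no larger size, and a destructive
reversal for `x` yields one for `y` of no larger size. As `T` is its own sorted tournament, `x`
wins in `T` whenever `y` does.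
-/

/-- An `n`-weighted tournament on vertex set `V`. -/
structure WTournament (V : Type) (n : ℕ) where
  w : V → V → ℤ
  diag : ∀ x, w x x = 0
  nonneg : ∀ x y, x ≠ y → 0 ≤ w x y
  compl : ∀ x y, x ≠ y → w x y + w y x = (n : ℤ)

namespace WTournament

variable {V : Type} {n : ℕ}

/-- The (majority) margin of `x` over `y`. -/
def margin (T : WTournament V n) (x y : V) : ℤ :=
  T.w x y - T.w y x

/-- The Borda score of `x`. -/
def sBO [Fintype V] (T : WTournament V n) (x : V) : ℤ :=
  ∑ z, T.w x z

/-- The set of Borda winners. -/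
def BO [Fintype V] (T : WTournament V n) : Set V :=
  {x | ∀ y, T.sBO y ≤ T.sBO x}

/-- The weighted outdegree of `x`. -/
def wdeg [Fintype V] (T : WTournament V n) (x : V) : ℤ :=
  ∑ z, T.w x z

/-- `x` w-covers `y`. -/
def WCovers (T : WTournament V n) (x y : V) : Prop :=
  0 < T.margin x y ∧ ∀ z, z ≠ x → z ≠ y → T.w y z ≤ T.w x z

/-- The weighted uncovered set. -/
def wUC (T : WTournament V n) : Set V :=
  {x | ∀ y, ¬ T.WCovers y x}

/-- The consecutive edges of a vertex sequence. -/
def seqEdges (l : List V) : List (V × V) :=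
  l.zip l.tail

/-- A dominance cycle. -/
def IsDominanceCycle (T : WTournament V n) (l : List V) : Prop :=
  2 ≤ l.length ∧ l.head? = l.getLast? ∧ ∀ e ∈ seqEdges l, 0 < T.margin e.1 e.2

/-- The splitting number of a cycle. -/
def splitNum (T : WTournament V n) (l : List V) : ℤ :=
  ((seqEdges l).map fun e => T.margin e.1 e.2).foldr min (n : ℤ)

/-- `e` is a splitting edge of the cycle `l`. -/
def IsSplittingEdge (T : WTournament V n) (l : List V) (e : V × V) : Prop :=
  e ∈ seqEdges l ∧ T.margin e.1 e.2 = T.splitNum l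

/-- `(x, y)` is an edge of the margin graph surviving the deletion of every splitting
edge of every dominance cycle (i.e. an edge of `M_D`). -/
def EdgeMD (T : WTournament V n) (x y : V) : Prop :=
  0 < T.margin x y ∧
    ¬ ∃ l : List V, T.IsDominanceCycle l ∧ T.IsSplittingEdge l (x, y)

/-- The set of Split Cycle winners. -/
def SC (T : WTournament V n) : Set V :=
  {x | ∀ y, ¬ T.EdgeMD y x}

/-- A reversal function for the tournament `T`. -/
structure Reversal (T : WTournament V n) where
  r : V → V → ℤ
  antisymm : ∀ x y, r x y = - r y x
  lo : ∀ x y, x ≠ y → 0 ≤ T.w x y + r x y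
  hi : ∀ x y, x ≠ y → T.w x y + r x y ≤ (n : ℤ)

/-- The size of a reversal function. -/
def Reversal.size [Fintype V] {T : WTournament V n} (R : Reversal T) : ℤ :=
  ∑ x : V, ∑ y : V, max (R.r x y) 0

/-- The tournament obtained from `T` by the reversal `R`. -/
def apply (T : WTournament V n) (R : Reversal T) : WTournament V n :=
  { w := fun x y => T.w x y + R.r x y
    diag := fun x => by
      have h := R.antisymm x x
      have h1 := T.diag x
      show T.w x x + R.r x x = 0
      linarith
    nonneg := fun x y h => R.lo x y h
    compl := fun x y h => by
      have h1 := R.antisymm x y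
      have h2 := T.compl x y h
      show (T.w x y + R.r x y) + (T.w y x + R.r y x) = (n : ℤ)
      linarith }

/-- `R` witnesses the margin of victory of `a`: it is a destructive reversal set if
`a` is a winner and a constructive reversal set if `a` is a non-winner. -/
def IsMoVWitness (S : WTournament V n → Set V) (T : WTournament V n) (a : V)
    (R : Reversal T) : Prop :=
  a ∈ S T ↔ a ∉ S (T.apply R)

open Classical in
/-- The margin of victory of `a` in `T` with respect to the tournament solution `S`:
the minimum size of a destructive reversal set for winners, and minus the minimum
size of a constructive reversal set for non-winners. -/
noncomputable def MoV [Fintype V] (S : WTournament V n → Set V)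
    (T : WTournament V n) (a : V) : ℤ :=
  if a ∈ S T then
    sInf {k : ℤ | ∃ R : Reversal T, IsMoVWitness S T a R ∧ R.size = k}
  else
    - sInf {k : ℤ | ∃ R : Reversal T, IsMoVWitness S T a R ∧ R.size = k}

/-- The reversal values with `R (a, b) = 1`, `R (b, a) = -1` and `0` elsewhere. -/
def singleFun [DecidableEq V] (a b : V) : V → V → ℤ := fun p q =>
  if p = a ∧ q = b then 1 else if p = b ∧ q = a then -1 else 0

/-- The reversal values with `Q (b, c) = -1`, `Q (c, b) = 1`, `Q (a, c) = 1`,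
`Q (c, a) = -1` and `0` elsewhere. -/
def transferFun [DecidableEq V] (a b c : V) : V → V → ℤ := fun p q =>
  if p = b ∧ q = c then -1
  else if p = c ∧ q = b then 1
  else if p = a ∧ q = c then 1
  else if p = c ∧ q = a then -1
  else 0

/-- A monotonic tournament solution. -/
def IsMonotonic [DecidableEq V] (S : WTournament V n → Set V) : Prop :=
  ∀ (T : WTournament V n) (a b : V) (R : Reversal T),
    a ≠ b → a ∈ S T → T.w a b < (n : ℤ) → R.r = singleFun a b →
    a ∈ S (T.apply R)

/-- A transfer-monotonic tournament solution. -/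
def IsTransferMonotonic [DecidableEq V] (S : WTournament V n → Set V) : Prop :=
  ∀ (T : WTournament V n) (a b c : V) (Q : Reversal T),
    a ≠ b → a ≠ c → b ≠ c → a ∈ S T → 0 < T.w b c → T.w a c < (n : ℤ) →
    Q.r = transferFun a b c → a ∈ S (T.apply Q)

end WTournament

namespace WTournament

variable {V : Type} {n : ℕ}

/-! ### Split Cycle winners and paths -/

lemma margin_neg (T : WTournament V n) (a b : V) : T.margin b a = - T.margin a b := by
  simp [margin]

lemma margin_le (T : WTournament V n) (a b : V) : T.margin a b ≤ n := by
  by_cases h : a = b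
  · subst h; simp [margin]
  · have h1 := T.compl a b h
    have h2 := T.nonneg b a (Ne.symm h)
    unfold margin
    omega

/-- There is a path from `a` to `b` all of whose edges have margin at least `t`. -/
def Reach (T : WTournament V n) (t : ℤ) : V → V → Prop :=
  Relation.ReflTransGen fun a b => t ≤ T.margin a b

/-- An edge `(z, a)` on a walk splits it into a walk from its start to `z` and a walk from `a`
to its end. -/
lemma reach_of_mem_seqEdges (T : WTournament V n) (t : ℤ) (z a : V) :
    ∀ (l : List V) (h g : V), l.head? = some h → l.getLast? = some g →
      (∀ e ∈ seqEdges l, t ≤ T.margin e.1 e.2) →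
      T.Reach t h g ∧ ((z, a) ∈ seqEdges l → T.Reach t h z ∧ T.Reach t a g)
  | [], h, g, hh, _, _ => by simp at hh
  | [b], h, g, hh, hg, _ => by
      simp at hh hg
      subst hh; subst hg
      exact ⟨.refl, by simp [seqEdges]⟩
  | b :: c :: l, h, g, hh, hg, he => by
      simp only [List.head?_cons, Option.some.injEq] at hh
      subst hh
      have hs : seqEdges (b :: c :: l) = (b, c) :: seqEdges (c :: l) := rfl
      rw [hs] at he ⊢
      have ih := reach_of_mem_seqEdges T t z a (c :: l) c g rfl
        (by simpa [List.getLast?_cons_cons] using hg)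
        (fun e h => he e (List.mem_cons_of_mem _ h))
      have hbc : t ≤ T.margin b c := he (b, c) List.mem_cons_self
      refine ⟨.head hbc ih.1, fun hm => ?_⟩
      rcases List.mem_cons.1 hm with hm | hm
      · simp only [Prod.mk.injEq] at hm
        obtain ⟨rfl, rfl⟩ := hm
        exact ⟨.refl, ih.1⟩
      · exact ⟨.head hbc (ih.2 hm).1, (ih.2 hm).2⟩

lemma splitNum_le (T : WTournament V n) (l : List V) :
    ∀ e ∈ seqEdges l, T.splitNum l ≤ T.margin e.1 e.2 := by
  unfold splitNum
  induction seqEdges l with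
  | nil => simp
  | cons a L ih =>
    intro e he
    rcases List.mem_cons.1 he with rfl | he
    · simp
    · have := ih e he
      simp only [List.map_cons, List.foldr_cons]
      omega

lemma le_splitNum (T : WTournament V n) (l : List V) (t : ℤ) (ht : t ≤ n)
    (h : ∀ e ∈ seqEdges l, t ≤ T.margin e.1 e.2) : t ≤ T.splitNum l := by
  unfold splitNum
  generalize seqEdges l = L at h
  induction L with
  | nil => simpa
  | cons a L ih => grind

lemma forall_seqEdges_of_isChain {R : V → V → Prop} :
    ∀ l : List V, l.IsChain R → ∀ e ∈ seqEdges l, R e.1 e.2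
  | [], _, e, he => by simp [seqEdges] at he
  | [b], _, e, he => by simp [seqEdges] at he
  | b :: c :: l, h, e, he => by
      have hs : seqEdges (b :: c :: l) = (b, c) :: seqEdges (c :: l) := rfl
      rw [hs] at he
      rw [List.isChain_cons_cons] at h
      rcases List.mem_cons.1 he with rfl | he
      · exact h.1
      · exact forall_seqEdges_of_isChain _ h.2 e he

/-- The path characterization of Split Cycle: closing up a path from `a` to `z` by the edge
`(z, a)` gives a cycle with `(z, a)` as a splitting edge, and conversely. -/
lemma mem_SC_iff (T : WTournament V n) (a : V) :
    a ∈ T.SC ↔ ∀ z, 0 < T.margin z a → T.Reach (T.margin z a) a z := by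
  constructor
  · intro h z hz
    have h1 := h z
    simp only [EdgeMD, not_and, not_not] at h1
    obtain ⟨l, ⟨hlen, hclosed, -⟩, hmem, hsplit⟩ := h1 hz
    cases l with
    | nil => simp at hlen
    | cons c l =>
      have := reach_of_mem_seqEdges T (T.margin z a) z a (c :: l) c c rfl
        (by rw [← hclosed]; rfl)
        (fun e he => by
          have := T.splitNum_le _ e he
          simp only at hsplit
          omega)
      exact (this.2 hmem).2.trans (this.2 hmem).1
  · rintro h z ⟨hz, hno⟩
    obtain ⟨l, hl, hlast⟩ := List.exists_isChain_cons_of_relationReflTransGen (h z hz)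
    have hs : seqEdges (z :: a :: l) = (z, a) :: seqEdges (a :: l) := rfl
    have hall : ∀ e ∈ seqEdges (z :: a :: l), T.margin z a ≤ T.margin e.1 e.2 := by
      rw [hs]
      intro e he
      rcases List.mem_cons.1 he with rfl | he
      · exact le_rfl
      · exact forall_seqEdges_of_isChain _ hl e he
    have hmem : (z, a) ∈ seqEdges (z :: a :: l) := by simp [hs]
    refine hno ⟨z :: a :: l, ⟨by simp, ?_, fun e he => hz.trans_le (hall e he)⟩, hmem, ?_⟩
    · rw [List.getLast?_cons_cons, List.getLast?_eq_getLast_of_ne_nil (List.cons_ne_nil a l), hlast]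
      rfl
    · exact le_antisymm (T.le_splitNum _ _ (T.margin_le z a) hall) (T.splitNum_le _ _ hmem)

/-! ### Sorting and Split Cycle winners -/

/-- `S` arises from `T` by sorting the rows of `x` and `y` in favour of `x`. The columns of `x`
and `y` are determined by antisymmetry of the margins. -/
structure IsSort (T S : WTournament V n) (x y : V) : Prop where
  xy : S.margin x y = max (T.margin x y) (T.margin y x)
  xq : ∀ q, q ≠ x → q ≠ y → S.margin x q = max (T.margin x q) (T.margin y q)
  yq : ∀ q, q ≠ x → q ≠ y → S.margin y q = min (T.margin x q) (T.margin y q)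
  pq : ∀ p q, p ≠ x → p ≠ y → q ≠ x → q ≠ y → S.margin p q = T.margin p q

lemma IsSort.mem_SC {T S : WTournament V n} {x y : V} (h : IsSort T S x y)
    (hy : y ∈ T.SC) : x ∈ S.SC := by
  rw [mem_SC_iff] at hy ⊢
  intro z hz
  have hSx : ∀ q, S.margin q x = - S.margin x q := S.margin_neg x
  have hTx : ∀ q, T.margin q x = - T.margin x q := T.margin_neg x
  have hTy : ∀ q, T.margin q y = - T.margin y q := T.margin_neg y
  have hzx : z ≠ x := by rintro rfl; have := hSx z; omega
  have hzy : z ≠ y := by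
    rintro rfl
    have := hSx z; have := hTx z; have := h.xy
    omega
  have hle : S.margin z x ≤ T.margin z y := by
    have := hSx z; have := hTy z; have := h.xq z hzx hzy
    omega
  -- A path of `T` is followed in `S` from its last visit to `{x, y}` on, with `x` as start.
  have key : ∀ v, T.Reach (T.margin z y) y v → v = x ∨ v = y ∨ S.Reach (S.margin z x) x v := by
    intro v hv
    induction hv with
    | refl => exact .inr (.inl rfl)
    | @tail b c _ hbc ih =>
      by_cases hcx : c = x
      · exact .inl hcx
      by_cases hcy : c = y
      · exact .inr (.inl hcy)
      refine .inr (.inr ?_)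
      have hxc := h.xq c hcx hcy
      by_cases hbx : b = x
      · subst hbx; exact .single (by omega)
      by_cases hby : b = y
      · subst hby; exact .single (by omega)
      have hb := h.pq b c hbx hby hcx hcy
      have ih' := (ih.resolve_left hbx).resolve_left hby
      exact ih'.tail (by omega)
  exact ((key z (hy z (by omega))).resolve_left hzx).resolve_left hzy

lemma IsSort.notMem_SC {T S : WTournament V n} {x y : V} (h : IsSort T S x y)
    (hx : x ∉ T.SC) : y ∉ S.SC := by
  contrapose! hx
  rw [mem_SC_iff] at hx ⊢
  intro z hz
  set t := T.margin z x with ht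
  have hSx : ∀ q, S.margin q x = - S.margin x q := S.margin_neg x
  have hSy : ∀ q, S.margin q y = - S.margin y q := S.margin_neg y
  have hTx : ∀ q, T.margin q x = - T.margin x q := T.margin_neg x
  have hTy : ∀ q, T.margin q y = - T.margin y q := T.margin_neg y
  have hxy := h.xy
  -- `y` plays the role of `x` until `x` is visited. Visiting `x` in `S` requires a predecessor
  -- which beats both `x` and `y` in `T`, so from then on `y` is reachable from `x` in `T`.
  have key : ∀ s, t ≤ s → ∀ v, S.Reach s y v →
      v = y ∨ (v ≠ x ∧ T.Reach t x v) ∨ (v = x ∧ T.Reach t x y) := by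
    intro s hs v hv
    induction hv with
    | refl => exact .inl rfl
    | @tail b c _ hbc ih =>
      by_cases hcy : c = y
      · exact .inl hcy
      refine .inr ?_
      by_cases hby : b = y
      · subst hby
        have hcx : c ≠ x := by
          rintro rfl
          have := hSx b; have := hTx b
          omega
        have := h.yq c hcx hcy
        exact .inl ⟨hcx, .single (by omega)⟩
      have ih' := ih.resolve_left hby
      by_cases hcx : c = x
      · subst hcx
        rcases ih' with ⟨hbx, hb⟩ | ⟨hbx, hb⟩
        · refine .inr ⟨rfl, hb.tail ?_⟩
          have := h.xq b hbx hby; have := hSx b; have := hTy b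
          omega
        · exact .inr ⟨rfl, hb⟩
      refine .inl ⟨hcx, ?_⟩
      rcases ih' with ⟨hbx, hb⟩ | ⟨rfl, hb⟩
      · have := h.pq b c hbx hby hcx hcy
        exact hb.tail (by omega)
      · have := h.xq c hcx hcy
        rcases le_total (T.margin y c) (T.margin b c) with h1 | h1
        · exact .single (by omega)
        · exact hb.tail (by omega)
  have hzx : z ≠ x := by rintro rfl; have := hTx z; omega
  by_cases hzy : z = y
  · subst hzy
    rcases key _ (by omega) x (hx x (by omega)) with h1 | h1 | h1
    · exact absurd h1.symm hzx
    · exact absurd rfl h1.1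
    · exact h1.2
  · have h1 := h.yq z hzx hzy
    have h2 := hSy z
    have h3 := hTx z
    have hle : t ≤ S.margin z y := by omega
    rcases key _ hle z (hx z (by omega)) with h1 | h1 | h1
    · exact absurd h1 hzy
    · exact h1.2
    · exact absurd h1.1 hzx

/-! ### The sorted tournament -/

open Classical in
/-- The weights of `T` with the rows of `x` and `y` sorted in favour of `x`, and their columns
against it. -/
noncomputable def sortW (T : WTournament V n) (x y p q : V) : ℤ :=
  if p = q then 0
  else if p = x then
    if q = y then max (T.w x y) (T.w y x) else max (T.w x q) (T.w y q)
  else if p = y then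
    if q = x then min (T.w x y) (T.w y x) else min (T.w x q) (T.w y q)
  else if q = x then min (T.w p x) (T.w p y)
  else if q = y then max (T.w p x) (T.w p y)
  else T.w p q

/-- The tournament obtained from `T` by sorting the rows of `x` and `y` in favour of `x`. -/
noncomputable def sortT (T : WTournament V n) (x y : V) (hxy : x ≠ y) : WTournament V n where
  w := T.sortW x y
  diag := by simp [sortW]
  nonneg p q h := by
    have := T.nonneg
    unfold sortW
    grind
  compl p q h := by
    have := T.compl
    unfold sortW
    grind

lemma isSort_sortT (T : WTournament V n) (x y : V) (hxy : x ≠ y) :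
    IsSort T (T.sortT x y hxy) x y where
  xy := by
    simp only [margin, sortT, sortW]
    grind
  xq q h1 h2 := by
    have := T.compl x q h1.symm
    have := T.compl y q h2.symm
    simp only [margin, sortT, sortW]
    grind
  yq q h1 h2 := by
    have := T.compl x q h1.symm
    have := T.compl y q h2.symm
    simp only [margin, sortT, sortW]
    grind
  pq p q h1 h2 h3 h4 := by
    have := T.diag p
    simp only [margin, sortT, sortW]
    grind

lemma WCovers.isSort {T : WTournament V n} {x y : V} (h : T.WCovers x y) : IsSort T T x y := by
  obtain ⟨h0, h⟩ := h
  have := T.margin_neg x y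
  have key : ∀ q, q ≠ x → q ≠ y → T.margin y q ≤ T.margin x q := fun q h1 h2 => by
    have := T.compl x q h1.symm
    have := T.compl y q h2.symm
    have := h q h1 h2
    unfold margin
    omega
  refine ⟨by omega, fun q h1 h2 => ?_, fun q h1 h2 => ?_, fun _ _ _ _ _ _ => rfl⟩
  · have := key q h1 h2; omega
  · have := key q h1 h2; omega

/-! ### Sorting and distances -/

/-- The distance between two tournaments on the same alternatives. -/
def dist [Fintype V] (T S : WTournament V n) : ℤ := ∑ p, ∑ q, max (S.w p q - T.w p q) 0

open Classical in
/-- A double sum may be symmetrized over the swap of `x` and `y` in each argument. -/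
lemma sum_swap [Fintype V] (x y : V) (f : V → V → ℤ) :
    ∑ p, ∑ q, (f p q + f (Equiv.swap x y p) q +
      (f p (Equiv.swap x y q) + f (Equiv.swap x y p) (Equiv.swap x y q))) =
    4 * ∑ p, ∑ q, f p q := by
  have h1 : ∀ p, ∑ q, f p (Equiv.swap x y q) = ∑ q, f p q :=
    fun p => Equiv.sum_comp (Equiv.swap x y) (f p)
  have h2 : ∑ p, ∑ q, f (Equiv.swap x y p) q = ∑ p, ∑ q, f p q :=
    Equiv.sum_comp (Equiv.swap x y) fun p => ∑ q, f p q
  simp only [Finset.sum_add_distrib, h1, h2]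
  ring

/-- Sorting does not increase the distance to a tournament which is sorted already. After
symmetrization over the swap of `x` and `y` this holds for each pair of alternatives. -/
lemma dist_sortT_le [Fintype V] {T : WTournament V n} {x y : V} (h : T.WCovers x y) (hxy : x ≠ y)
    (S : WTournament V n) : T.dist (S.sortT x y hxy) ≤ T.dist S := by
  classical
  set f : V → V → ℤ := fun p q => max (S.w p q - T.w p q) 0 with hf
  set g : V → V → ℤ := fun p q => max ((S.sortT x y hxy).w p q - T.w p q) 0 with hg
  have hfd : T.dist S = ∑ p, ∑ q, f p q := rfl
  have hgd : T.dist (S.sortT x y hxy) = ∑ p, ∑ q, g p q := rfl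
  have h0 : 0 < T.w x y - T.w y x := h.1
  have hrow : ∀ q, q ≠ x → q ≠ y → g x q + g y q ≤ f x q + f y q := fun q h1 h2 => by
    have := h.2 q h1 h2
    simp only [hf, hg, sortT, sortW]
    grind
  have hcol : ∀ p, p ≠ x → p ≠ y → g p x + g p y ≤ f p x + f p y := fun p h1 h2 => by
    have := h.2 p h1 h2
    have := T.compl x p h1.symm
    have := T.compl y p h2.symm
    simp only [hf, hg, sortT, sortW]
    grind
  have hedge : g x y + g y x ≤ f x y + f y x := by
    simp only [hf, hg, sortT, sortW]
    grind
  have hdiag : ∀ p, g p p = f p p := fun p => by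
    simp only [hf, hg, WTournament.diag]
  have hrest : ∀ p q, p ≠ x → p ≠ y → q ≠ x → q ≠ y → g p q = f p q :=
    fun p q h1 h2 h3 h4 => by
      have := S.diag p
      simp only [hf, hg, sortT, sortW]
      grind
  have hdx := hdiag x
  have hdy := hdiag y
  clear_value f g
  have hsum := Finset.sum_le_sum fun p (_ : p ∈ Finset.univ) =>
    Finset.sum_le_sum fun q (_ : q ∈ Finset.univ) =>
      show g p q + g (Equiv.swap x y p) q +
          (g p (Equiv.swap x y q) + g (Equiv.swap x y p) (Equiv.swap x y q)) ≤
        f p q + f (Equiv.swap x y p) q +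
          (f p (Equiv.swap x y q) + f (Equiv.swap x y p) (Equiv.swap x y q)) by
        simp only [Equiv.swap_apply_def]
        grind
  rw [sum_swap, sum_swap] at hsum
  omega

/-! ### Reversals and margins of victory -/

/-- The reversal taking `T` to `S`. -/
def toReversal (T S : WTournament V n) : Reversal T where
  r p q := S.w p q - T.w p q
  antisymm p q := by
    by_cases h : p = q
    · subst h; simp [T.diag, S.diag]
    · have := T.compl p q h
      have := S.compl p q h
      omega
  lo p q h := by have := S.nonneg p q h; omega
  hi p q h := by have := S.compl p q h; have := S.nonneg q p h.symm; omega

lemma apply_toReversal (T S : WTournament V n) : T.apply (T.toReversal S) = S := by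
  cases S
  simp [apply, toReversal]

lemma size_toReversal [Fintype V] (T S : WTournament V n) :
    (T.toReversal S).size = T.dist S := rfl

lemma Reversal.size_eq_dist [Fintype V] {T : WTournament V n} (R : Reversal T) :
    R.size = T.dist (T.apply R) := by
  simp [Reversal.size, dist, apply]

lemma Reversal.size_nonneg [Fintype V] {T : WTournament V n} (R : Reversal T) : 0 ≤ R.size :=
  Finset.sum_nonneg fun _ _ => Finset.sum_nonneg fun _ _ => le_max_right _ _

/-- Minimal sizes of witnesses are compared by converting witnesses for `a` into witnesses
for `b`. -/
lemma sInf_size_le [Fintype V] {S : WTournament V n → Set V} {T : WTournament V n} {a b : V}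
    (hEx : ∃ R : Reversal T, IsMoVWitness S T a R)
    (h : ∀ R : Reversal T, IsMoVWitness S T a R →
      ∃ R' : Reversal T, IsMoVWitness S T b R' ∧ R'.size ≤ R.size) :
    sInf {k : ℤ | ∃ R : Reversal T, IsMoVWitness S T b R ∧ R.size = k} ≤
      sInf {k : ℤ | ∃ R : Reversal T, IsMoVWitness S T a R ∧ R.size = k} := by
  obtain ⟨R₀, hR₀⟩ := hEx
  refine le_csInf ⟨_, R₀, hR₀, rfl⟩ ?_
  rintro _ ⟨R, hR, rfl⟩
  obtain ⟨R', hR', hle⟩ := h R hR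
  refine le_trans (csInf_le ⟨0, ?_⟩ ⟨R', hR', rfl⟩) hle
  rintro _ ⟨Q, -, rfl⟩
  exact Q.size_nonneg

lemma sInf_size_nonneg [Fintype V] {S : WTournament V n → Set V} {T : WTournament V n} {a : V}
    (hEx : ∃ R : Reversal T, IsMoVWitness S T a R) :
    0 ≤ sInf {k : ℤ | ∃ R : Reversal T, IsMoVWitness S T a R ∧ R.size = k} := by
  obtain ⟨R₀, hR₀⟩ := hEx
  refine le_csInf ⟨_, R₀, hR₀, rfl⟩ ?_
  rintro _ ⟨R, -, rfl⟩
  exact R.size_nonneg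

end WTournament

/-- `MoV_SC` satisfies cover-consistency. -/
theorem MoV_SC_cover_consistent {V : Type} [Fintype V] {n : ℕ}
    (hEx : ∀ (T : WTournament V n) (a : V),
      ∃ R : WTournament.Reversal T, WTournament.IsMoVWitness WTournament.SC T a R) :
    ∀ (T : WTournament V n) (x y : V), T.WCovers x y →
      WTournament.MoV WTournament.SC T y ≤ WTournament.MoV WTournament.SC T x := by
  intro T x y h
  have hxy : x ≠ y := by
    rintro rfl
    simpa [WTournament.margin] using h.1
  -- Sorting the outcome of a reversal of `T` gives a reversal of no larger size.
  have hsize : ∀ R : WTournament.Reversal T,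
      (T.toReversal ((T.apply R).sortT x y hxy)).size ≤ R.size := fun R => by
    rw [WTournament.size_toReversal, R.size_eq_dist]
    exact WTournament.dist_sortT_le h hxy _
  unfold WTournament.MoV
  split_ifs with hy hx hx
  · refine WTournament.sInf_size_le (hEx T x) fun R hR =>
      ⟨_, ?_, hsize R⟩
    have := (WTournament.isSort_sortT (T.apply R) x y hxy).notMem_SC (hR.1 hx)
    simpa [WTournament.IsMoVWitness, hy, WTournament.apply_toReversal] using this
  · exact absurd (h.isSort.mem_SC hy) hx
  · have h1 := WTournament.sInf_size_nonneg (hEx T y)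
    have h2 := WTournament.sInf_size_nonneg (hEx T x)
    omega
  · apply neg_le_neg
    refine WTournament.sInf_size_le (hEx T y) fun R hR =>
      ⟨_, ?_, hsize R⟩
    have hyR : y ∈ (T.apply R).SC := not_not.1 fun hn => hy (hR.2 hn)
    have := (WTournament.isSort_sortT (T.apply R) x y hxy).mem_SC hyR
    simpa [WTournament.IsMoVWitness, hx, WTournament.apply_toReversal] using this
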